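/- Let d ≥ 1, p ∈ [1,∞), r ∈ ℕ_0, let s ∈ (r, r+1) (non-integer), and let m ∈ ℕ_0 with m ≤ r, and let μ₀ > 0. Then there exists a constant C > 0, depending only on d, s, p and μ₀, such that for every d-dimensional simplex T ⊆ ℝ^d with shape measure μ(T) ≤ μ₀ and every function v that is (r+1)-times continuously differentiable on a neighborhood of T, one has inf over polynomials q of total degree ≤ r of ( ∫_T ‖D^m v(x) − D^m q(x)‖^p dx )^{1/p} ≤ C · h_T^{s−m} · ( ∫_T ∫_T ‖D^r v(x) − D^r v(y)‖^p / ‖x − y‖^{d + (s−r) p} dx dy )^{1/p}, where D^k denotes the k-th total (Fréchet) derivative and ‖·‖ a fixed norm on the corresponding space of multilinear maps, and h_T is the diameter of T. -/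

import Mathlib

/-!
Let `P` be the Taylor polynomial of degree `r` of `v` at a point `z ∈ T`. The derivatives of `v - P`
of order `< r` vanish at `z`, so integrating along segments from `z` gives
`‖Dᵐ(v - P)(y)‖ ≤ ‖y - z‖ ^ (r - m) * ∫ t in 0..1, ‖Dʳv z - Dʳv (z + t • (y - z))‖`.
After Jensen and Fubini, the homothety `y ↦ z + t • (y - z)` contributes a Jacobian `t ^ (-n)`,
which is absorbed by the singular weight because `‖u - z‖ ≤ t * diam T` on the image of `T` and the
exponent of the weight is at least `n`. This bounds the `p`-th power of the error by the inner
Gagliardo integral at `z`, and some `z ∈ T` makes the latter at most its mean over `T`. Averaging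
divides by `vol T`, which is how the shape measure enters.

Bochner integrals of non-integrable functions are `0`, so this requires the Gagliardo kernel to be
integrable on `T × T`: for `Dʳv` Lipschitz it is dominated by a multiple of
`‖x - y‖ ^ (p - n - (s - r) p)`, whose exponent exceeds `-n` since `s < r + 1`.
-/

open MeasureTheory

section Symmetry

variable {𝕜 E F : Type*} [NontriviallyNormedField 𝕜]
  [NormedAddCommGroup E] [NormedSpace 𝕜 E] [NormedAddCommGroup F] [NormedSpace 𝕜 F]

theorem iteratedFDeriv_add_two_apply {f : E → F} {x : E} {n : ℕ}
    (hf : ContDiffAt 𝕜 (n + 2 : ℕ) f x) (w : Fin (n + 2) → E) :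
    iteratedFDeriv 𝕜 (n + 2) f x w =
      fderiv 𝕜 (fderiv 𝕜 (iteratedFDeriv 𝕜 n f)) x (w 0) (w 1) (Fin.tail (Fin.tail w)) := by
  have h2 : ContDiffAt 𝕜 2 (iteratedFDeriv 𝕜 n f) x :=
    hf.iteratedFDeriv_right (by norm_cast; omega)
  have hd : DifferentiableAt 𝕜 (fderiv 𝕜 (iteratedFDeriv 𝕜 n f)) x :=
    (h2.fderiv_right (m := 1) (by norm_num)).differentiableAt one_ne_zero
  have hd1 : HasFDerivAt (fun y => fderiv 𝕜 (iteratedFDeriv 𝕜 n f) y (w 1))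
      ((fderiv 𝕜 (fderiv 𝕜 (iteratedFDeriv 𝕜 n f)) x).flip (w 1)) x := by
    simpa using hd.hasFDerivAt.clm_apply (hasFDerivAt_const (w 1) x)
  rw [(hf.differentiableAt_iteratedFDeriv
    (by norm_cast; omega)).iteratedFDeriv_succ_apply_left']
  exact DFunLike.congr_fun
    (hd1.continuousMultilinear_apply_const (Fin.tail (Fin.tail w))).fderiv (w 0)

variable [IsRCLikeNormedField 𝕜] {f : E → F}

theorem iteratedFDeriv_comp_swap_succ {n : ℕ} (i : Fin n) {x : E}
    (hf : ContDiffAt 𝕜 (n + 1 : ℕ) f x) (w : Fin (n + 1) → E) :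
    iteratedFDeriv 𝕜 (n + 1) f x (w ∘ Equiv.swap i.castSucc i.succ) =
      iteratedFDeriv 𝕜 (n + 1) f x w := by
  induction n generalizing x with
  | zero => exact i.elim0
  | succ n ih =>
    cases i using Fin.cases with
    | zero =>
      have hsymm : IsSymmSndFDerivAt 𝕜 (iteratedFDeriv 𝕜 n f) x :=
        (hf.iteratedFDeriv_right (m := 2) (by norm_cast; omega)).isSymmSndFDerivAt (by simp)
      have htail : Fin.tail (Fin.tail (w ∘ Equiv.swap 0 1)) = Fin.tail (Fin.tail w) := by
        funext k
        simp only [Fin.tail, Function.comp_apply]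
        rw [Equiv.swap_apply_of_ne_of_ne (Fin.succ_ne_zero _) (by simp [Fin.ext_iff])]
      rw [iteratedFDeriv_add_two_apply hf, iteratedFDeriv_add_two_apply hf, Fin.castSucc_zero,
        Fin.succ_zero_eq_one, htail, ← hsymm.eq]
      simp
    | succ j =>
      have htail : Fin.tail (w ∘ Equiv.swap j.succ.castSucc j.succ.succ) =
          Fin.tail w ∘ Equiv.swap j.castSucc j.succ := by
        funext k
        simp only [Fin.tail, Function.comp_apply, ← Fin.succ_castSucc,
          (Fin.succ_injective _).swap_apply]
      have hdiff : DifferentiableAt 𝕜 (iteratedFDeriv 𝕜 (n + 1) f) x :=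
        hf.differentiableAt_iteratedFDeriv (by norm_cast; omega)
      have hih : (fun y => iteratedFDeriv 𝕜 (n + 1) f y (Fin.tail w ∘ Equiv.swap j.castSucc j.succ))
          =ᶠ[nhds x] fun y => iteratedFDeriv 𝕜 (n + 1) f y (Fin.tail w) := by
        filter_upwards [(hf.of_le (m := (n + 1 : ℕ)) (by norm_cast; omega)).eventually (by simp)]
          with y hy using ih j hy (Fin.tail w)
      rw [hdiff.iteratedFDeriv_succ_apply_left', hdiff.iteratedFDeriv_succ_apply_left', htail,
        hih.fderiv_eq, Function.comp_apply, Equiv.swap_apply_of_ne_of_ne]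
      · exact Fin.ne_of_lt (by simp [Fin.lt_def])
      · exact Fin.ne_of_lt (by simp [Fin.lt_def])

theorem iteratedFDeriv_comp_perm_of_contDiffAt {n : ℕ} {x : E} (hf : ContDiffAt 𝕜 n f x)
    (w : Fin n → E) (τ : Equiv.Perm (Fin n)) :
    iteratedFDeriv 𝕜 n f x (w ∘ τ) = iteratedFDeriv 𝕜 n f x w := by
  cases n with
  | zero => exact congrArg _ (Subsingleton.elim _ _)
  | succ n =>
    have hτ : τ ∈ Submonoid.closure
        (Set.range fun i : Fin n ↦ Equiv.swap i.castSucc i.succ) := by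
      rw [Equiv.Perm.mclosure_swap_castSucc_succ]; exact Submonoid.mem_top τ
    induction hτ using Submonoid.closure_induction generalizing w with
    | mem τ h => obtain ⟨i, rfl⟩ := h; exact iteratedFDeriv_comp_swap_succ i hf w
    | one => rfl
    | mul a b _ _ ha hb => rw [Equiv.Perm.coe_mul, ← Function.comp_assoc, hb, ha]

end Symmetry

section TaylorPolynomial

open Finset

theorem iteratedFDeriv_eq_of_hasFiniteFPowerSeriesOnBall {𝕜 E F : Type*}
    [NontriviallyNormedField 𝕜] [NormedAddCommGroup E] [NormedSpace 𝕜 E]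
    [NormedAddCommGroup F] [NormedSpace 𝕜 F] {f : E → F} {P : FormalMultilinearSeries 𝕜 E F}
    {z : E} {r : ℕ} (hf : HasFiniteFPowerSeriesOnBall f P z (r + 1) ⊤) (y : E) :
    iteratedFDeriv 𝕜 r f y = iteratedFDeriv 𝕜 r f z := by
  have hfa : AnalyticOn 𝕜 f Set.univ := by simpa using hf.cpolynomialOn.analyticOn
  have hD : HasFPowerSeriesOnBall (iteratedFDeriv 𝕜 r f) (P.iteratedFDerivSeries r) z ⊤ := by
    simpa only [iteratedFDerivWithin_univ, hasFPowerSeriesWithinOnBall_univ] using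
      (hf.toHasFPowerSeriesOnBall.hasFPowerSeriesWithinOnBall (s := Set.univ)).iteratedFDerivWithin
        hfa r uniqueDiffOn_univ (Set.mem_univ z)
  have hfin : HasFiniteFPowerSeriesOnBall (iteratedFDeriv 𝕜 r f) (P.iteratedFDerivSeries r) z 1 ⊤ :=
    ⟨hD, fun k hk => P.iteratedFDerivSeries_eq_zero (hf.finite _ (by omega))⟩
  exact hfin.eq_const_of_bound_one y (by simp)

variable {E F : Type*} [NormedAddCommGroup E] [NormedSpace ℝ E] [NormedAddCommGroup F]
  [NormedSpace ℝ F]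

/-- The Taylor polynomial of degree `r` of `v` at `z`, as a function on `E`. -/
noncomputable def taylorPolynomial (r : ℕ) (v : E → F) (z w : E) : F :=
  ∑ k ∈ range (r + 1), (k.factorial : ℝ)⁻¹ • iteratedFDeriv ℝ k v z fun _ => w - z

/-- The finite power series at `z` whose sum is `taylorPolynomial r v z`. -/
noncomputable def taylorSeries (r : ℕ) (v : E → F) (z : E) : FormalMultilinearSeries ℝ E F :=
  fun k => if k ≤ r then (k.factorial : ℝ)⁻¹ • iteratedFDeriv ℝ k v z else 0

theorem hasFiniteFPowerSeriesOnBall_taylorPolynomial (r : ℕ) (v : E → F) (z : E) :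
    HasFiniteFPowerSeriesOnBall (taylorPolynomial r v z) (taylorSeries r v z) z (r + 1) ⊤ := by
  refine HasFiniteFPowerSeriesOnBall.mk' (fun k hk => if_neg (by omega)) (by simp) fun y _ => ?_
  refine Finset.sum_congr rfl fun k hk => ?_
  simp only [taylorSeries, if_pos (Nat.lt_succ_iff.1 (mem_range.1 hk)), add_sub_cancel_left,
    smul_apply]

theorem contDiff_taylorPolynomial (r : ℕ) (v : E → F) (z : E) {n : WithTop ℕ∞} :
    ContDiff ℝ n (taylorPolynomial r v z) := by
  unfold taylorPolynomial
  refine ContDiff.sum fun k _ => ContDiff.const_smul _ ?_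
  exact (iteratedFDeriv ℝ k v z).contDiff.comp
    (contDiff_pi.2 fun _ => contDiff_id.sub contDiff_const)

theorem iteratedFDeriv_taylorPolynomial_self {r k : ℕ} (hk : k ≤ r) {v : E → F} {z : E}
    (hv : ContDiffAt ℝ k v z) :
    iteratedFDeriv ℝ k (taylorPolynomial r v z) z = iteratedFDeriv ℝ k v z := by
  ext w
  have hterm (τ : Equiv.Perm (Fin k)) : taylorSeries r v z k (fun i => w (τ i)) =
      (k.factorial : ℝ)⁻¹ • iteratedFDeriv ℝ k v z w := by
    simp only [taylorSeries, if_pos hk, smul_apply]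
    rw [← iteratedFDeriv_comp_perm_of_contDiffAt hv w τ]
    rfl
  have han : AnalyticOn ℝ (taylorPolynomial r v z) Set.univ :=
    (contDiff_taylorPolynomial r v z).contDiffOn.analyticOn
  rw [(hasFiniteFPowerSeriesOnBall_taylorPolynomial r v
    z).toHasFPowerSeriesOnBall.iteratedFDeriv_eq_sum han]
  simp only [hterm, sum_const, card_univ, Fintype.card_perm, Fintype.card_fin]
  rw [← Nat.cast_smul_eq_nsmul ℝ, smul_inv_smul₀ (by positivity)]

theorem iteratedFDeriv_taylorPolynomial_of_contDiffAt {r : ℕ} {v : E → F} {z : E}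
    (hv : ContDiffAt ℝ r v z) (y : E) :
    iteratedFDeriv ℝ r (taylorPolynomial r v z) y = iteratedFDeriv ℝ r v z := by
  rw [iteratedFDeriv_eq_of_hasFiniteFPowerSeriesOnBall
    (hasFiniteFPowerSeriesOnBall_taylorPolynomial r v z) y,
    iteratedFDeriv_taylorPolynomial_self le_rfl hv]

end TaylorPolynomial

section SegmentRemainder

variable {E F : Type*} [NormedAddCommGroup E] [NormedSpace ℝ E] [NormedAddCommGroup F]
  [NormedSpace ℝ F]

theorem add_smul_sub_mem_segment {z y : E} {t : ℝ} (ht : t ∈ Set.Icc (0 : ℝ) 1) :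
    z + t • (y - z) ∈ segment ℝ z y := by
  rw [segment_eq_image']; exact Set.mem_image_of_mem _ ht

theorem continuousOn_comp_segment {X : Type*} [TopologicalSpace X] {f : E → X} {z y : E}
    (hf : ContinuousOn f (segment ℝ z y)) :
    ContinuousOn (fun t : ℝ => f (z + t • (y - z))) (Set.Icc 0 1) :=
  hf.comp (by fun_prop) fun _ ht => add_smul_sub_mem_segment ht

theorem norm_sub_le_integral_fderiv_segment {f : E → F} {z y : E}
    (hf : ∀ x ∈ segment ℝ z y, ContDiffAt ℝ 1 f x) {τ : ℝ} (hτ : τ ∈ Set.Icc (0 : ℝ) 1) :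
    ‖f (z + τ • (y - z)) - f z‖ ≤
      ‖y - z‖ * ∫ t in (0 : ℝ)..1, ‖fderiv ℝ f (z + t • (y - z))‖ := by
  have hderiv : ∀ t ∈ Set.Icc (0 : ℝ) 1, HasDerivAt (fun t : ℝ => f (z + t • (y - z)))
      (fderiv ℝ f (z + t • (y - z)) (y - z)) t := by
    intro t ht
    have hline : HasDerivAt (fun t : ℝ => z + t • (y - z)) (y - z) t := by
      simpa using ((hasDerivAt_id t).smul_const (y - z)).const_add z
    exact ((hf _ (add_smul_sub_mem_segment ht)).differentiableAt
      one_ne_zero).hasFDerivAt.comp_hasDerivAt t hline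
  have hcont : ContinuousOn (fun t : ℝ => ‖y - z‖ * ‖fderiv ℝ f (z + t • (y - z))‖)
      (Set.Icc 0 1) :=
    continuousOn_const.mul (continuousOn_comp_segment fun x hx =>
      ((hf x hx).fderiv_right (m := 0) (by norm_num)).continuousAt.continuousWithinAt).norm
  have hsub : Set.Icc 0 τ ⊆ Set.Icc 0 1 := Set.Icc_subset_Icc_right hτ.2
  rw [← intervalIntegral.integral_const_mul]
  calc ‖f (z + τ • (y - z)) - f z‖
      = ‖f (z + τ • (y - z)) - f (z + (0 : ℝ) • (y - z))‖ := by rw [zero_smul, add_zero]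
    _ ≤ ∫ t in (0 : ℝ)..τ, ‖y - z‖ * ‖fderiv ℝ f (z + t • (y - z))‖ := by
        refine norm_sub_le_integral_of_norm_deriv_le_of_le (f := fun t : ℝ => f (z + t • (y - z)))
          hτ.1 (fun t ht => (hderiv t (hsub ht)).continuousAt.continuousWithinAt)
          (fun t ht => (hderiv t (hsub (Set.Ioo_subset_Icc_self
            ht))).differentiableAt.differentiableWithinAt)
          (Filter.Eventually.of_forall fun t ht => ?_)
          ((hcont.mono hsub).intervalIntegrable_of_Icc hτ.1)
        rw [(hderiv t (hsub (Set.Ioo_subset_Icc_self ht))).deriv, mul_comm]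
        exact ContinuousLinearMap.le_opNorm _ _
    _ ≤ ∫ t in (0 : ℝ)..1, ‖y - z‖ * ‖fderiv ℝ f (z + t • (y - z))‖ :=
        intervalIntegral.integral_mono_interval le_rfl hτ.1 hτ.2
          (Filter.Eventually.of_forall fun t => by positivity)
          (hcont.intervalIntegrable_of_Icc zero_le_one)

theorem norm_iteratedFDeriv_le_pow_mul_integral {g : E → F} {r : ℕ} {z y : E}
    (hg : ∀ x ∈ segment ℝ z y, ContDiffAt ℝ r g x)
    (hz : ∀ k < r, iteratedFDeriv ℝ k g z = 0) {k : ℕ} (hk : k < r) {τ : ℝ}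
    (hτ : τ ∈ Set.Icc (0 : ℝ) 1) :
    ‖iteratedFDeriv ℝ k g (z + τ • (y - z))‖ ≤
      ‖y - z‖ ^ (r - k) * ∫ t in (0 : ℝ)..1, ‖iteratedFDeriv ℝ r g (z + t • (y - z))‖ := by
  have hstep {k : ℕ} (hk : k < r) {τ : ℝ} (hτ : τ ∈ Set.Icc (0 : ℝ) 1) :
      ‖iteratedFDeriv ℝ k g (z + τ • (y - z))‖ ≤
        ‖y - z‖ * ∫ t in (0 : ℝ)..1, ‖iteratedFDeriv ℝ (k + 1) g (z + t • (y - z))‖ := by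
    have hgk : ∀ x ∈ segment ℝ z y, ContDiffAt ℝ 1 (iteratedFDeriv ℝ k g) x := fun x hx =>
      (hg x hx).iteratedFDeriv_right (by norm_cast; omega)
    simpa only [hz k hk, sub_zero, norm_fderiv_iteratedFDeriv] using
      norm_sub_le_integral_fderiv_segment hgk hτ
  obtain ⟨j, hj⟩ := Nat.exists_eq_succ_of_ne_zero (Nat.sub_ne_zero_of_lt hk)
  rw [hj]
  induction j generalizing k τ with
  | zero =>
    obtain rfl : r = k + 1 := by omega
    simpa only [Nat.succ_eq_add_one, zero_add, pow_one] using hstep k.lt_succ_self hτ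
  | succ j ih =>
    have hcont : ContinuousOn (fun t : ℝ => ‖iteratedFDeriv ℝ (k + 1) g (z + t • (y - z))‖)
        (Set.Icc 0 1) := (continuousOn_comp_segment fun x hx =>
          ((hg x hx).continuousAt_iteratedFDeriv (by norm_cast)).continuousWithinAt).norm
    calc ‖iteratedFDeriv ℝ k g (z + τ • (y - z))‖
        ≤ ‖y - z‖ * ∫ t in (0 : ℝ)..1, ‖iteratedFDeriv ℝ (k + 1) g (z + t • (y - z))‖ :=
          hstep hk hτ
      _ ≤ ‖y - z‖ * ∫ _t in (0 : ℝ)..1, ‖y - z‖ ^ (j + 1) *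
            ∫ t in (0 : ℝ)..1, ‖iteratedFDeriv ℝ r g (z + t • (y - z))‖ := by
          gcongr
          exact intervalIntegral.integral_mono_on zero_le_one
            (hcont.intervalIntegrable_of_Icc zero_le_one) intervalIntegrable_const
            fun t ht => ih (by omega) ht (by omega)
      _ = ‖y - z‖ ^ (j + 1 + 1) *
            ∫ t in (0 : ℝ)..1, ‖iteratedFDeriv ℝ r g (z + t • (y - z))‖ := by
          rw [intervalIntegral.integral_const, sub_zero, one_smul, pow_succ' _ (j + 1), mul_assoc]

end SegmentRemainder

section MeasureLemmas

theorem diam_pos_of_measure_ne_zero {X : Type*} [MetricSpace X] [MeasurableSpace X]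
    {μ : Measure X} [NullSingletonClass μ] {T : Set X} (hT : Bornology.IsBounded T)
    (hμT : μ T ≠ 0) : 0 < Metric.diam T := by
  refine Metric.diam_pos ?_ hT
  by_contra h
  exact hμT ((Set.not_nontrivial_iff.1 h).measure_zero μ)

theorem measure_convexHull_range_ne_zero {ι E : Type*} [Fintype ι] [NormedAddCommGroup E]
    [NormedSpace ℝ E] [FiniteDimensional ℝ E] [MeasurableSpace E] {μ : Measure E}
    [μ.IsOpenPosMeasure] {x : ι → E} (hx : AffineIndependent ℝ x)
    (hcard : Fintype.card ι = Module.finrank ℝ E + 1) : μ (convexHull ℝ (Set.range x)) ≠ 0 := by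
  refine (Measure.measure_pos_of_nonempty_interior μ ?_).ne'
  rw [interior_convexHull_nonempty_iff_affineSpan_eq_top]
  exact hx.affineSpan_eq_top_iff_card_eq_finrank_add_one.2 hcard

theorem rpow_integral_le_integral_rpow {Ω : Type*} [MeasurableSpace Ω] {ν : Measure Ω}
    [IsProbabilityMeasure ν] {f : Ω → ℝ} (hf0 : 0 ≤ᵐ[ν] f) (hf : Integrable f ν) {p : ℝ}
    (hp : 1 ≤ p) (hfp : Integrable (fun ω => f ω ^ p) ν) :
    (∫ ω, f ω ∂ν) ^ p ≤ ∫ ω, f ω ^ p ∂ν :=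
  (convexOn_rpow hp).map_integral_le (g := fun x : ℝ => x ^ p)
    (Real.continuous_rpow_const (by linarith)).continuousOn isClosed_Ici hf0 hf hfp

theorem exists_mem_setIntegral_le_average {α : Type*} [MeasurableSpace α] {μ : Measure α}
    [SFinite μ] {T : Set α} (hT : MeasurableSet T) (hμT : μ T ≠ 0) (hμT' : μ T ≠ ⊤)
    {f : α → α → ℝ} (hf : IntegrableOn (Function.uncurry f) (T ×ˢ T) (μ.prod μ)) :
    ∃ z ∈ T, IntegrableOn (f z) T μ ∧
      ∫ u in T, f z u ∂μ ≤ (μ.real T)⁻¹ * ∫ y in T, (∫ u in T, f y u ∂μ) ∂μ := by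
  have : IsFiniteMeasure (μ.restrict T) := ⟨by simpa using hμT'.lt_top⟩
  rw [IntegrableOn, ← Measure.prod_restrict] at hf
  have hgood : ∀ᵐ z ∂μ.restrict T, z ∈ T ∧ IntegrableOn (f z) T μ :=
    (ae_restrict_mem hT).and hf.prod_right_ae
  obtain ⟨z, hz, hle⟩ := exists_notMem_null_le_average (by simpa using hμT)
    hf.integral_prod_left (ae_iff.1 hgood)
  obtain ⟨hzT, hzint⟩ := not_not.1 hz
  exact ⟨z, hzT, hzint, by simpa [average_eq] using hle⟩

variable {E F : Type*} [NormedAddCommGroup E] [NormedSpace ℝ E] [FiniteDimensional ℝ E]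
  [MeasurableSpace E] [BorelSpace E] [NormedAddCommGroup F] {μ : Measure E} [μ.IsAddHaarMeasure]

theorem integrable_comp_homothety (z : E) {f : E → F} (hf : Integrable f μ) {t : ℝ} (ht : t ≠ 0) :
    Integrable (fun y => f (z + t • (y - z))) μ :=
  (((hf.comp_add_left z).comp_smul ht).comp_sub_right z)

theorem integral_comp_homothety [NormedSpace ℝ F] (f : E → F) (z : E) {t : ℝ} (ht : 0 < t) :
    t ^ Module.finrank ℝ E • ∫ y, f (z + t • (y - z)) ∂μ = ∫ y, f y ∂μ := by
  rw [integral_sub_right_eq_self (fun y => f (z + t • y)) z,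
    Measure.integral_comp_smul_of_nonneg μ (fun y => f (z + y)) t (hR := ht.le),
    integral_add_left_eq_self f z, smul_inv_smul₀ (by positivity)]

end MeasureLemmas

section GagliardoKernel

variable {E V : Type*} [NormedAddCommGroup E] [NormedSpace ℝ E] [NormedAddCommGroup V]

/-- The integrand `‖G x - G y‖ ^ p / ‖x - y‖ ^ (n + σ p)`, `n = dim E`, of the `p`-th power of the
Gagliardo seminorm of order `σ`. -/
noncomputable def gagliardoKernel (p σ : ℝ) (G : E → V) (x y : E) : ℝ :=
  ‖G x - G y‖ ^ p / ‖x - y‖ ^ ((Module.finrank ℝ E : ℝ) + σ * p)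

theorem gagliardoKernel_nonneg (p σ : ℝ) (G : E → V) (x y : E) : 0 ≤ gagliardoKernel p σ G x y := by
  unfold gagliardoKernel; positivity

theorem gagliardoKernel_le_of_lipschitzOnWith {p σ : ℝ} {G : E → V} {T : Set E} {K : NNReal}
    (hp : 0 < p) (hG : LipschitzOnWith K G T) {x y : E} (hx : x ∈ T) (hy : y ∈ T) :
    gagliardoKernel p σ G x y ≤ K ^ p * ‖x - y‖ ^ (p - (Module.finrank ℝ E + σ * p)) := by
  obtain rfl | hne := eq_or_ne x y
  · rw [gagliardoKernel, sub_self, norm_zero, Real.zero_rpow hp.ne', zero_div]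
    positivity
  have hpos : 0 < ‖x - y‖ := norm_pos_iff.2 (sub_ne_zero.2 hne)
  rw [gagliardoKernel, Real.rpow_sub hpos, ← mul_div_assoc, ← Real.mul_rpow K.coe_nonneg hpos.le]
  gcongr
  exact hG.norm_sub_le hx hy

/-- The factor `t ^ n` is the Jacobian of the homothety `y ↦ z + t • (y - z)`, and it is produced by
the weight because `‖z - u‖ ≤ t * diam T` at the image `u` of `y`. -/
theorem rpow_norm_sub_le_gagliardoKernel {p σ : ℝ} (hp : 0 < p) (hσ : 0 ≤ σ) (G : E → V) {T : Set E}
    (hT : Bornology.IsBounded T) {z y : E} (hz : z ∈ T) (hy : y ∈ T) {t : ℝ}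
    (ht : t ∈ Set.Ioc (0 : ℝ) 1) :
    ‖G z - G (z + t • (y - z))‖ ^ p ≤
      Metric.diam T ^ ((Module.finrank ℝ E : ℝ) + σ * p) * (t ^ Module.finrank ℝ E *
        gagliardoKernel p σ G z (z + t • (y - z))) := by
  obtain rfl | hne := eq_or_ne y z
  · simp [gagliardoKernel, Real.zero_rpow hp.ne']
  have hpos : 0 < ‖y - z‖ := norm_pos_iff.2 (sub_ne_zero.2 hne)
  have hnorm : ‖z - (z + t • (y - z))‖ = t * ‖y - z‖ := by
    rw [sub_add_cancel_left, norm_neg, norm_smul, Real.norm_of_nonneg ht.1.le]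
  have ht0 : 0 < t := ht.1
  have hdiam : ‖y - z‖ ≤ Metric.diam T := by
    rw [← dist_eq_norm]; exact Metric.dist_le_diam_of_mem hT hy hz
  have hweight : (t * ‖y - z‖) ^ ((Module.finrank ℝ E : ℝ) + σ * p) ≤
      Metric.diam T ^ ((Module.finrank ℝ E : ℝ) + σ * p) * t ^ Module.finrank ℝ E := by
    rw [Real.mul_rpow ht0.le hpos.le, mul_comm, ← Real.rpow_natCast t]
    gcongr ?_ * ?_
    · gcongr
    · exact Real.rpow_le_rpow_of_exponent_ge ht0 ht.2 (le_add_of_nonneg_right (by positivity))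
  rw [gagliardoKernel, hnorm, ← mul_assoc, mul_div_assoc', le_div_iff₀ (by positivity), mul_comm]
  gcongr

theorem continuousOn_norm_sub_segment {G : E → V} {T : Set E} {z : E} (hTc : Convex ℝ T)
    (hG : ContinuousOn G T) (hz : z ∈ T) :
    ContinuousOn (fun x : E × ℝ => ‖G z - G (z + x.2 • (x.1 - z))‖) (T ×ˢ Set.Icc 0 1) :=
  (continuousOn_const.sub (hG.comp (by fun_prop) fun _ hx =>
    hTc.add_smul_sub_mem hz hx.1 hx.2)).norm

variable [FiniteDimensional ℝ E] [MeasurableSpace E] [BorelSpace E] {μ : Measure E}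
  [μ.IsAddHaarMeasure] {p σ : ℝ} {G : E → V} {T : Set E} {z : E}

theorem setIntegral_homothety_le_gagliardoKernel (hp : 0 < p) (hσ : 0 ≤ σ) (hT : IsCompact T)
    (hTc : Convex ℝ T) (hz : z ∈ T) (hint : IntegrableOn (gagliardoKernel p σ G z) T μ) {t : ℝ}
    (ht : t ∈ Set.Ioc (0 : ℝ) 1) :
    ∫ y in T, ‖G z - G (z + t • (y - z))‖ ^ p ∂μ ≤
      Metric.diam T ^ ((Module.finrank ℝ E : ℝ) + σ * p) *
        ∫ u in T, gagliardoKernel p σ G z u ∂μ := by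
  set f : E → ℝ := T.indicator (gagliardoKernel p σ G z)
  have hf : Integrable f μ := hint.integrable_indicator hT.measurableSet
  have hf0 (u : E) : 0 ≤ f u := Set.indicator_nonneg (fun _ _ => gagliardoKernel_nonneg ..) u
  set c : ℝ := Metric.diam T ^ ((Module.finrank ℝ E : ℝ) + σ * p) * t ^ Module.finrank ℝ E
  have hc : 0 ≤ c := mul_nonneg (Real.rpow_nonneg Metric.diam_nonneg _) (pow_nonneg ht.1.le _)
  have hfc : Integrable (fun y => c * f (z + t • (y - z))) μ :=
    (integrable_comp_homothety z hf ht.1.ne').const_mul c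
  calc ∫ y in T, ‖G z - G (z + t • (y - z))‖ ^ p ∂μ
      ≤ ∫ y in T, c * f (z + t • (y - z)) ∂μ := by
        refine integral_mono_of_nonneg (Filter.Eventually.of_forall fun y => by positivity)
          hfc.integrableOn ((ae_restrict_mem hT.measurableSet).mono fun y hy => ?_)
        have hu : z + t • (y - z) ∈ T := hTc.add_smul_sub_mem hz hy (Set.Ioc_subset_Icc_self ht)
        simpa only [f, c, Set.indicator_of_mem hu, mul_assoc] using
          rpow_norm_sub_le_gagliardoKernel hp hσ G hT.isBounded hz hy ht
    _ ≤ ∫ y, c * f (z + t • (y - z)) ∂μ :=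
        setIntegral_le_integral hfc (Filter.Eventually.of_forall fun y => mul_nonneg hc (hf0 _))
    _ = Metric.diam T ^ ((Module.finrank ℝ E : ℝ) + σ * p) *
        ∫ u in T, gagliardoKernel p σ G z u ∂μ := by
        rw [integral_const_mul, mul_assoc, ← smul_eq_mul (t ^ _), integral_comp_homothety f z ht.1,
          integral_indicator hT.measurableSet]

theorem integrable_rpow_norm_sub_segment (hp : 0 ≤ p) (hT : IsCompact T) (hTc : Convex ℝ T)
    (hG : ContinuousOn G T) (hz : z ∈ T) :
    Integrable (Function.uncurry fun y (t : ℝ) => ‖G z - G (z + t • (y - z))‖ ^ p)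
      ((μ.restrict T).prod (volume.restrict (Set.Ioc (0 : ℝ) 1))) := by
  rw [Measure.prod_restrict]
  exact (((continuousOn_norm_sub_segment hTc hG hz).rpow_const fun _ _ =>
    Or.inr hp).integrableOn_compact (hT.prod isCompact_Icc)).mono_set
      (Set.prod_mono le_rfl Set.Ioc_subset_Icc_self)

theorem setIntegral_segment_average_le_gagliardoKernel (hp : 0 < p) (hσ : 0 ≤ σ)
    (hT : IsCompact T) (hTc : Convex ℝ T) (hG : ContinuousOn G T) (hz : z ∈ T)
    (hint : IntegrableOn (gagliardoKernel p σ G z) T μ) :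
    ∫ y in T, (∫ t in Set.Ioc (0 : ℝ) 1, ‖G z - G (z + t • (y - z))‖ ^ p) ∂μ ≤
      Metric.diam T ^ ((Module.finrank ℝ E : ℝ) + σ * p) *
        ∫ u in T, gagliardoKernel p σ G z u ∂μ := by
  have hintegrable := integrable_rpow_norm_sub_segment (μ := μ) hp.le hT hTc hG hz
  calc ∫ y in T, (∫ t in Set.Ioc (0 : ℝ) 1, ‖G z - G (z + t • (y - z))‖ ^ p) ∂μ
      = ∫ t in Set.Ioc (0 : ℝ) 1, ∫ y in T, ‖G z - G (z + t • (y - z))‖ ^ p ∂μ :=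
        integral_integral_swap hintegrable
    _ ≤ ∫ _t in Set.Ioc (0 : ℝ) 1, Metric.diam T ^ ((Module.finrank ℝ E : ℝ) + σ * p) *
          ∫ u in T, gagliardoKernel p σ G z u ∂μ :=
        setIntegral_mono_on hintegrable.integral_prod_right (integrable_const _) measurableSet_Ioc
          fun t ht => setIntegral_homothety_le_gagliardoKernel hp hσ hT hTc hz hint ht
    _ = Metric.diam T ^ ((Module.finrank ℝ E : ℝ) + σ * p) *
          ∫ u in T, gagliardoKernel p σ G z u ∂μ := by simp

end GagliardoKernel

section LipschitzKernel

variable {E V : Type*} [NormedAddCommGroup E] [NormedSpace ℝ E] [NormedAddCommGroup V]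
  [FiniteDimensional ℝ E] [Nontrivial E] [MeasurableSpace E] [BorelSpace E] {μ : Measure E}
  [μ.IsAddHaarMeasure] {p σ : ℝ} {G : E → V} {T : Set E}

theorem integrable_indicator_ball_norm_rpow {α : ℝ} (hα : -Module.finrank ℝ E < α) (R : ℝ) :
    Integrable ((Metric.ball (0 : E) R).indicator fun x => ‖x‖ ^ α) μ := by
  rw [integrable_indicator_iff Metric.isOpen_ball.measurableSet]
  refine integrableOn_ball_of_norm_le_rpow (C := 1) (α := -α) Module.finrank_pos (by linarith)
    (Filter.Eventually.of_forall fun x => ?_) (measurable_norm.pow_const _).aestronglyMeasurable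
  rw [Real.norm_of_nonneg (by positivity), neg_neg, one_mul]

theorem integrableOn_uncurry_gagliardoKernel_of_lipschitzOnWith {K : NNReal} (hp : 0 < p)
    (hσ : σ < 1) (hT : IsCompact T) (hG : LipschitzOnWith K G T) :
    IntegrableOn (Function.uncurry (gagliardoKernel p σ G)) (T ×ˢ T) (μ.prod μ) := by
  set α : ℝ := p - (Module.finrank ℝ E + σ * p)
  set W : E → ℝ := (Metric.ball 0 (Metric.diam T + 1)).indicator fun x => ‖x‖ ^ α
  have hW : Integrable W μ := integrable_indicator_ball_norm_rpow (by simp only [α]; nlinarith) _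
  have hdom : Integrable (fun x : E × E => K ^ p * (T.indicator 1 x.2 * W (x.1 - x.2)))
      (μ.prod μ) :=
    ((integrableOn_const hT.measure_lt_top.ne).integrable_indicator
      hT.measurableSet).convolution_integrand (ContinuousLinearMap.mul ℝ ℝ) hW |>.const_mul _
  have hTT : MeasurableSet (T ×ˢ T) := hT.measurableSet.prod hT.measurableSet
  refine hdom.integrableOn.mono' ?_ ((ae_restrict_mem hTT).mono ?_)
  · have hnum : ContinuousOn (fun x : E × E => ‖G x.1 - G x.2‖ ^ p) (T ×ˢ T) :=
      ((hG.continuousOn.comp continuousOn_fst fun _ hx => hx.1).sub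
        (hG.continuousOn.comp continuousOn_snd fun _ hx => hx.2)).norm.rpow_const
          fun _ _ => Or.inr hp.le
    exact ((hnum.aemeasurable hTT).div
      ((measurable_fst.sub measurable_snd).norm.pow_const _).aemeasurable).aestronglyMeasurable
  · rintro ⟨x, y⟩ ⟨hx, hy⟩
    have hball : x - y ∈ Metric.ball (0 : E) (Metric.diam T + 1) := by
      rw [mem_ball_zero_iff, ← dist_eq_norm]
      exact (Metric.dist_le_diam_of_mem hT.isBounded hx hy).trans_lt (lt_add_one _)
    simp only [W, Function.uncurry_apply_pair, Set.indicator_of_mem hy,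
      Set.indicator_of_mem hball, Pi.one_apply, one_mul]
    rw [Real.norm_of_nonneg (gagliardoKernel_nonneg ..)]
    exact gagliardoKernel_le_of_lipschitzOnWith hp hG hx hy

end LipschitzKernel

section BrambleHilbert

variable {E F : Type*} [NormedAddCommGroup E] [NormedSpace ℝ E] [NormedAddCommGroup F]
  [NormedSpace ℝ F] {r m : ℕ} {v : E → F} {z y : E}

theorem norm_iteratedFDeriv_sub_taylorPolynomial_le (hm : m < r)
    (hv : ∀ x ∈ segment ℝ z y, ContDiffAt ℝ r v x) :
    ‖iteratedFDeriv ℝ m v y - iteratedFDeriv ℝ m (taylorPolynomial r v z) y‖ ≤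
      ‖y - z‖ ^ (r - m) * ∫ t in (0 : ℝ)..1,
        ‖iteratedFDeriv ℝ r v z - iteratedFDeriv ℝ r v (z + t • (y - z))‖ := by
  set g : E → F := v - taylorPolynomial r v z
  have hg : ∀ x ∈ segment ℝ z y, ContDiffAt ℝ r g x := fun x hx =>
    (hv x hx).sub (contDiff_taylorPolynomial r v z).contDiffAt
  have hsub {k : ℕ} (hk : k ≤ r) {x : E} (hx : x ∈ segment ℝ z y) :
      iteratedFDeriv ℝ k g x =
        iteratedFDeriv ℝ k v x - iteratedFDeriv ℝ k (taylorPolynomial r v z) x :=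
    iteratedFDeriv_sub_apply ((hv x hx).of_le (by exact_mod_cast hk))
      (contDiff_taylorPolynomial r v z).contDiffAt
  have hz : z ∈ segment ℝ z y := left_mem_segment ℝ z y
  have hvanish : ∀ k < r, iteratedFDeriv ℝ k g z = 0 := fun k hk => by
    rw [hsub hk.le hz, iteratedFDeriv_taylorPolynomial_self hk.le
      ((hv z hz).of_le (by exact_mod_cast hk.le)), sub_self]
  have htop : ∀ t ∈ Set.uIcc (0 : ℝ) 1, ‖iteratedFDeriv ℝ r g (z + t • (y - z))‖ =
      ‖iteratedFDeriv ℝ r v z - iteratedFDeriv ℝ r v (z + t • (y - z))‖ := fun t ht => by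
    rw [Set.uIcc_of_le zero_le_one] at ht
    rw [hsub le_rfl (add_smul_sub_mem_segment ht),
      iteratedFDeriv_taylorPolynomial_of_contDiffAt (hv z hz), norm_sub_rev]
  rw [← hsub hm.le (right_mem_segment ℝ z y), ← intervalIntegral.integral_congr htop]
  simpa only [one_smul, add_sub_cancel] using
    norm_iteratedFDeriv_le_pow_mul_integral hg hvanish hm (Set.right_mem_Icc.2 zero_le_one)

theorem rpow_norm_iteratedFDeriv_sub_taylorPolynomial_le {p : ℝ} (hp : 1 ≤ p) (hm : m < r)
    (hv : ∀ x ∈ segment ℝ z y, ContDiffAt ℝ r v x) :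
    ‖iteratedFDeriv ℝ m v y - iteratedFDeriv ℝ m (taylorPolynomial r v z) y‖ ^ p ≤
      (‖y - z‖ ^ (r - m)) ^ p * ∫ t in Set.Ioc (0 : ℝ) 1,
        ‖iteratedFDeriv ℝ r v z - iteratedFDeriv ℝ r v (z + t • (y - z))‖ ^ p := by
  have hcont : ContinuousOn (fun t : ℝ =>
      ‖iteratedFDeriv ℝ r v z - iteratedFDeriv ℝ r v (z + t • (y - z))‖) (Set.Icc 0 1) :=
    (continuousOn_const.sub (continuousOn_comp_segment fun x hx =>
      ((hv x hx).continuousAt_iteratedFDeriv le_rfl).continuousWithinAt)).norm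
  have hmean := norm_iteratedFDeriv_sub_taylorPolynomial_le hm hv
  rw [intervalIntegral.integral_of_le zero_le_one] at hmean
  refine (Real.rpow_le_rpow (norm_nonneg _) hmean (by linarith)).trans ?_
  rw [Real.mul_rpow (by positivity) (integral_nonneg fun _ => norm_nonneg _)]
  gcongr
  have : IsProbabilityMeasure (volume.restrict (Set.Ioc (0 : ℝ) 1)) := ⟨by simp⟩
  exact rpow_integral_le_integral_rpow (Filter.Eventually.of_forall fun _ => norm_nonneg _)
    (hcont.integrableOn_Icc.mono_set Set.Ioc_subset_Icc_self) hp
    ((hcont.rpow_const fun _ _ => Or.inr (by linarith)).integrableOn_Icc.mono_set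
      Set.Ioc_subset_Icc_self)

variable [FiniteDimensional ℝ E] [MeasurableSpace E] [BorelSpace E] {μ : Measure E}
  [μ.IsAddHaarMeasure] {p s : ℝ} {T : Set E}

theorem setIntegral_taylorPolynomial_le_gagliardoKernel (hm : m ≤ r) (hp : 1 ≤ p) (hs : r ≤ s)
    (hT : IsCompact T) (hTc : Convex ℝ T) (hv : ∀ x ∈ T, ContDiffAt ℝ r v x) (hz : z ∈ T)
    (hint : IntegrableOn (gagliardoKernel p (s - r) (iteratedFDeriv ℝ r v) z) T μ) :
    ∫ y in T, ‖iteratedFDeriv ℝ m v y - iteratedFDeriv ℝ m (taylorPolynomial r v z) y‖ ^ p ∂μ ≤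
      (Metric.diam T ^ (r - m)) ^ p *
        (Metric.diam T ^ ((Module.finrank ℝ E : ℝ) + (s - r) * p) *
          ∫ u in T, gagliardoKernel p (s - r) (iteratedFDeriv ℝ r v) z u ∂μ) := by
  have hp0 : 0 < p := by linarith
  have hσ : 0 ≤ s - r := sub_nonneg.2 hs
  obtain rfl | hlt := hm.eq_or_lt
  · simpa [iteratedFDeriv_taylorPolynomial_of_contDiffAt (hv z hz), norm_sub_rev] using
      setIntegral_homothety_le_gagliardoKernel hp0 hσ hT hTc hz hint (Set.right_mem_Ioc.2 one_pos)
  have hG : ContinuousOn (iteratedFDeriv ℝ r v) T := fun x hx =>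
    ((hv x hx).continuousAt_iteratedFDeriv le_rfl).continuousWithinAt
  calc ∫ y in T, ‖iteratedFDeriv ℝ m v y - iteratedFDeriv ℝ m (taylorPolynomial r v z) y‖ ^ p ∂μ
      ≤ ∫ y in T, (Metric.diam T ^ (r - m)) ^ p * (∫ t in Set.Ioc (0 : ℝ) 1,
          ‖iteratedFDeriv ℝ r v z - iteratedFDeriv ℝ r v (z + t • (y - z))‖ ^ p) ∂μ := by
        refine integral_mono_of_nonneg (Filter.Eventually.of_forall fun y => by positivity)
          ((integrable_rpow_norm_sub_segment hp0.le hT hTc hG hz).integral_prod_left.const_mul _)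
          ((ae_restrict_mem hT.measurableSet).mono fun y hy => ?_)
        refine (rpow_norm_iteratedFDeriv_sub_taylorPolynomial_le hp hlt fun x hx =>
          hv x (hTc.segment_subset hz hy hx)).trans ?_
        have hdiam : ‖y - z‖ ≤ Metric.diam T := by
          rw [← dist_eq_norm]; exact Metric.dist_le_diam_of_mem hT.isBounded hy hz
        beta_reduce
        gcongr
    _ ≤ _ := by
        rw [integral_const_mul]
        gcongr
        exact setIntegral_segment_average_le_gagliardoKernel hp0 hσ hT hTc hG hz hint

variable [Nontrivial E]

theorem integrableOn_uncurry_gagliardoKernel_iteratedFDeriv (hp : 0 < p) (hs : s < r + 1)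
    (hT : IsCompact T) (hTc : Convex ℝ T) (hv : ∀ x ∈ T, ContDiffAt ℝ (r + 1) v x) :
    IntegrableOn (Function.uncurry (gagliardoKernel p (s - r) (iteratedFDeriv ℝ r v))) (T ×ˢ T)
      (μ.prod μ) := by
  have hG : ContDiffOn ℝ 1 (iteratedFDeriv ℝ r v) T := fun x hx =>
    ((hv x hx).iteratedFDeriv_right (by rw [add_comm])).contDiffWithinAt
  obtain ⟨K, hK⟩ := hG.exists_lipschitzOnWith one_ne_zero hTc hT
  exact integrableOn_uncurry_gagliardoKernel_of_lipschitzOnWith hp (by linarith) hT hK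

theorem exists_taylorPolynomial_rpow_integral_le (hp : 1 ≤ p) (hs : r ≤ s) (hT : IsCompact T)
    (hTc : Convex ℝ T) (hμT : μ T ≠ 0) (hv : ∀ x ∈ T, ContDiffAt ℝ r v x)
    (hint : IntegrableOn (Function.uncurry (gagliardoKernel p (s - r) (iteratedFDeriv ℝ r v)))
      (T ×ˢ T) (μ.prod μ)) :
    ∃ z ∈ T, ∀ m ≤ r,
      (∫ y in T, ‖iteratedFDeriv ℝ m v y -
          iteratedFDeriv ℝ m (taylorPolynomial r v z) y‖ ^ p ∂μ) ^ (1 / p) ≤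
        (Metric.diam T ^ Module.finrank ℝ E / μ.real T) ^ (1 / p) * Metric.diam T ^ (s - m) *
          (∫ y in T, (∫ u in T, gagliardoKernel p (s - r) (iteratedFDeriv ℝ r v) y u ∂μ) ∂μ) ^
            (1 / p) := by
  obtain ⟨z, hz, hzint, hzle⟩ := exists_mem_setIntegral_le_average hT.measurableSet hμT
    hT.measure_lt_top.ne hint
  refine ⟨z, hz, fun m hm => ?_⟩
  have hp0 : 0 < p := by linarith
  set h := Metric.diam T
  set I := ∫ y in T, (∫ u in T, gagliardoKernel p (s - r) (iteratedFDeriv ℝ r v) y u ∂μ) ∂μ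
  have hh : 0 < h := diam_pos_of_measure_ne_zero hT.isBounded hμT
  have hI : 0 ≤ I := integral_nonneg fun y => integral_nonneg fun u => gagliardoKernel_nonneg ..
  have hpow : (h ^ (r - m)) ^ p * h ^ (Module.finrank ℝ E + (s - r) * p) =
      h ^ Module.finrank ℝ E * (h ^ (s - m)) ^ p := by
    rw [← Real.rpow_natCast h (r - m), ← Real.rpow_natCast h (Module.finrank ℝ E),
      ← Real.rpow_mul hh.le, ← Real.rpow_mul hh.le, ← Real.rpow_add hh, ← Real.rpow_add hh,
      Nat.cast_sub hm]
    congr 1; ring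
  calc (∫ y in T, ‖iteratedFDeriv ℝ m v y -
          iteratedFDeriv ℝ m (taylorPolynomial r v z) y‖ ^ p ∂μ) ^ (1 / p)
      ≤ ((h ^ (r - m)) ^ p * (h ^ (Module.finrank ℝ E + (s - r) * p) *
          ((μ.real T)⁻¹ * I))) ^ (1 / p) := by
        gcongr
        refine (setIntegral_taylorPolynomial_le_gagliardoKernel hm hp hs hT hTc hv hz
          hzint).trans ?_
        gcongr
    _ = (h ^ Module.finrank ℝ E / μ.real T * (h ^ (s - m)) ^ p * I) ^ (1 / p) := by
        rw [← mul_assoc, hpow]; ring_nf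
    _ = (h ^ Module.finrank ℝ E / μ.real T) ^ (1 / p) * h ^ (s - m) * I ^ (1 / p) := by
        rw [Real.mul_rpow (by positivity) hI, Real.mul_rpow (by positivity) (by positivity),
          one_div, Real.rpow_rpow_inv (by positivity) hp0.ne']

end BrambleHilbert

section Coordinates

theorem exists_mvPolynomial_eval_eq_apply_sub {ι : Type*} [Finite ι] {k : ℕ}
    (A : ContinuousMultilinearMap ℝ (fun _ : Fin k => EuclideanSpace ℝ ι) ℝ)
    (z : EuclideanSpace ℝ ι) :
    ∃ q : MvPolynomial ι ℝ, q.totalDegree ≤ k ∧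
      ∀ w : EuclideanSpace ℝ ι, MvPolynomial.eval (fun i => w i) q = A fun _ => w - z := by
  classical
  have := Fintype.ofFinite ι
  refine ⟨∑ J : Fin k → ι, MvPolynomial.C (A fun i => EuclideanSpace.basisFun ι ℝ (J i)) *
    ∏ i, (MvPolynomial.X (J i) - MvPolynomial.C (z (J i))), ?_, fun w => ?_⟩
  · refine MvPolynomial.totalDegree_finsetSum_le fun J _ => ?_
    have hfactor (i : Fin k) :
        (MvPolynomial.X (J i) - MvPolynomial.C (z (J i)) : MvPolynomial ι ℝ).totalDegree ≤ 1 :=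
      (MvPolynomial.totalDegree_sub _ _).trans (by simp)
    calc _ ≤ 0 + ∑ i, (MvPolynomial.X (J i) - MvPolynomial.C (z (J i))).totalDegree := by
          refine (MvPolynomial.totalDegree_mul _ _).trans ?_
          rw [MvPolynomial.totalDegree_C]
          gcongr
          exact MvPolynomial.totalDegree_finsetProd _ _
      _ ≤ ∑ _i : Fin k, 1 := by
          rw [zero_add]; exact Finset.sum_le_sum fun i _ => hfactor i
      _ = k := by simp
  · have hw : w - z = ∑ j, (w j - z j) • EuclideanSpace.basisFun ι ℝ j := by
      simpa using ((EuclideanSpace.basisFun ι ℝ).sum_repr (w - z)).symm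
    rw [hw, ContinuousMultilinearMap.map_sum]
    simp only [map_sum, map_mul, map_prod, map_sub, MvPolynomial.eval_C, MvPolynomial.eval_X,
      ContinuousMultilinearMap.map_smul_univ, smul_eq_mul, mul_comm]

theorem exists_mvPolynomial_eval_eq_taylorPolynomial {ι : Type*} [Fintype ι] (r : ℕ)
    (v : EuclideanSpace ℝ ι → ℝ) (z : EuclideanSpace ℝ ι) :
    ∃ q : MvPolynomial ι ℝ, q.totalDegree ≤ r ∧
      ∀ w : EuclideanSpace ℝ ι, MvPolynomial.eval (fun i => w i) q = taylorPolynomial r v z w := by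
  choose q hdeg heval using fun k : ℕ =>
    exists_mvPolynomial_eval_eq_apply_sub (iteratedFDeriv ℝ k v z) z
  refine ⟨∑ k ∈ Finset.range (r + 1), (k.factorial : ℝ)⁻¹ • q k, ?_, fun w => ?_⟩
  · exact MvPolynomial.totalDegree_finsetSum_le fun k hk =>
      (MvPolynomial.totalDegree_smul_le _ _).trans
        ((hdeg k).trans (Nat.lt_succ_iff.1 (Finset.mem_range.1 hk)))
  · simp only [map_sum, MvPolynomial.smul_eval, heval, taylorPolynomial, smul_eq_mul]

end Coordinates

theorem bramble_hilbert_fractional_general {d r m : ℕ} (hd : 1 ≤ d) (hm : m ≤ r) {p s : ℝ}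
    (hp : 1 ≤ p) (hs : r ≤ s) {μ₀ : ℝ} {T : Set (EuclideanSpace ℝ (Fin d))} (hT : IsCompact T)
    (hTc : Convex ℝ T) (hvol : volume T ≠ 0) (hshape : Metric.diam T ^ d / volume.real T ≤ μ₀)
    {v : EuclideanSpace ℝ (Fin d) → ℝ} (hv : ∀ x ∈ T, ContDiffAt ℝ r v x)
    (hint : IntegrableOn (Function.uncurry (gagliardoKernel p (s - r) (iteratedFDeriv ℝ r v)))
      (T ×ˢ T)) :
    sInf {t : ℝ | ∃ q : MvPolynomial (Fin d) ℝ, q.totalDegree ≤ r ∧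
        t = (∫ y in T, ‖iteratedFDeriv ℝ m v y -
          iteratedFDeriv ℝ m (fun w => MvPolynomial.eval (fun i => w i) q) y‖ ^ p) ^ (1 / p)} ≤
      μ₀ ^ (1 / p) * Metric.diam T ^ (s - m) *
        (∫ y in T, ∫ z in T, gagliardoKernel p (s - r) (iteratedFDeriv ℝ r v) y z) ^ (1 / p) := by
  have : Nonempty (Fin d) := ⟨⟨0, hd⟩⟩
  obtain ⟨z, -, hz⟩ := exists_taylorPolynomial_rpow_integral_le hp hs hT hTc hvol hv hint
  obtain ⟨q, hdeg, hq⟩ := exists_mvPolynomial_eval_eq_taylorPolynomial r v z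
  have hz_le := hz m hm
  rw [← funext hq] at hz_le
  refine le_trans (csInf_le ⟨0, ?_⟩ ⟨q, hdeg, rfl⟩) (hz_le.trans ?_)
  · rintro _ ⟨q, -, rfl⟩
    positivity
  rw [finrank_euclideanSpace_fin]
  gcongr
  exact Real.rpow_nonneg (integral_nonneg fun y => integral_nonneg fun u =>
    gagliardoKernel_nonneg ..) _

/-- **Bramble–Hilbert / Deny–Lions polynomial approximation estimate in
fractional-order Sobolev seminorms.**
For `d ≥ 1`, `p ∈ [1,∞)`, `r ∈ ℕ₀`, non-integer `s ∈ (r, r+1)`, `m ≤ r` and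
`μ₀ > 0` there is `C > 0`, depending only on `d, s, p, μ₀`, such that for every
`d`-simplex `T = conv{x₀,…,x_d} ⊆ ℝ^d` with shape measure `h_T^d / vol(T) ≤ μ₀`
and every function `v` that is `C^{r+1}` on a neighborhood of `T`,
`inf_{deg q ≤ r} ( ∫_T ‖Dᵐv − Dᵐq‖^p )^{1/p}
  ≤ C · h_T^{s−m} · ( ∫_T ∫_T ‖Dʳv(x) − Dʳv(y)‖^p / ‖x−y‖^{d+(s−r)p} )^{1/p}`,
where `Dᵏ` denotes the `k`-th total (Fréchet) derivative. -/
theorem bramble_hilbert_fractional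
    (d r m : ℕ) (hd : 1 ≤ d) (hm : m ≤ r)
    (p s μ₀ : ℝ) (hp : 1 ≤ p) (hsr : (r : ℝ) < s) (hsr1 : s < (r : ℝ) + 1)
    (hμ₀ : 0 < μ₀) :
    ∃ C > 0,
      ∀ x : Fin (d + 1) → EuclideanSpace ℝ (Fin d),
        AffineIndependent ℝ x →
        Metric.diam (convexHull ℝ (Set.range x)) ^ d /
            (volume (convexHull ℝ (Set.range x))).toReal ≤ μ₀ →
        ∀ v : EuclideanSpace ℝ (Fin d) → ℝ,
          (∃ U : Set (EuclideanSpace ℝ (Fin d)), IsOpen U ∧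
            convexHull ℝ (Set.range x) ⊆ U ∧ ContDiffOn ℝ (r + 1) v U) →
          sInf {t : ℝ | ∃ q : MvPolynomial (Fin d) ℝ, q.totalDegree ≤ r ∧
              t = (∫ y in convexHull ℝ (Set.range x),
                    ‖iteratedFDeriv ℝ m v y -
                      iteratedFDeriv ℝ m (fun w => MvPolynomial.eval (fun i => w i) q) y‖ ^ p) ^
                  (1 / p)} ≤
            C * Metric.diam (convexHull ℝ (Set.range x)) ^ (s - (m : ℝ)) *
              (∫ y in convexHull ℝ (Set.range x), ∫ z in convexHull ℝ (Set.range x),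
                  ‖iteratedFDeriv ℝ r v y - iteratedFDeriv ℝ r v z‖ ^ p /
                    ‖y - z‖ ^ ((d : ℝ) + (s - (r : ℝ)) * p)) ^ (1 / p) := by
  refine ⟨μ₀ ^ (1 / p), by positivity, fun x hx hshape v ⟨U, hU, hTU, hv⟩ => ?_⟩
  have hT : IsCompact (convexHull ℝ (Set.range x)) := (Set.finite_range x).isCompact_convexHull ℝ
  have hvT : ∀ y ∈ convexHull ℝ (Set.range x), ContDiffAt ℝ (r + 1) v y := fun y hy =>
    hv.contDiffAt (hU.mem_nhds (hTU hy))
  have : Nonempty (Fin d) := ⟨⟨0, hd⟩⟩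
  simpa only [gagliardoKernel, finrank_euclideanSpace_fin] using
    bramble_hilbert_fractional_general hd hm hp hsr.le hT (convex_convexHull ℝ _)
      (measure_convexHull_range_ne_zero hx (by simp)) hshape
      (fun y hy => (hvT y hy).of_le (by norm_cast; omega))
      (integrableOn_uncurry_gagliardoKernel_iteratedFDeriv (by linarith) hsr1 hT
        (convex_convexHull ℝ _) hvT)
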